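/- Let h ∈ ℝ^N, let S₀ be the index set of its k largest-magnitude entries, and suppose ‖h_{S₀^c}‖₁ ≤ ‖h_{S₀}‖₁ + R√k for some R ≥ 0. Then ‖h_{S₀^c}‖₂ ≤ ‖h_{S₀}‖₂ + R, and consequently ‖h‖₂ ≤ √2·‖h_{S₀}‖₂ + R. -/

import Mathlib

open Finset

noncomputable section

/-- A vector is `k`-sparse if it has at most `k` nonzero entries. -/
def sparse {N : ℕ} (k : ℕ) (x : Fin N → ℝ) : Prop :=
  (Finset.univ.filter (fun i => x i ≠ 0)).card ≤ k

/-- Sparsity with a real bound (used for orders like `t·k` with `t` real). -/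
def sparseR {N : ℕ} (k : ℝ) (x : Fin N → ℝ) : Prop :=
  ((Finset.univ.filter (fun i => x i ≠ 0)).card : ℝ) ≤ k

/-- The ℓ₁ norm. -/
def l1 {N : ℕ} (x : Fin N → ℝ) : ℝ := ∑ i, |x i|

/-- The squared ℓ₂ norm. -/
def l2sq {N : ℕ} (x : Fin N → ℝ) : ℝ := ∑ i, (x i) ^ 2

/-- The ℓ₂ norm. -/
def l2 {N : ℕ} (x : Fin N → ℝ) : ℝ := Real.sqrt (l2sq x)

/-- The ℓ_p norm for real `p ≥ 1`. -/
def lpnorm {N : ℕ} (p : ℝ) (x : Fin N → ℝ) : ℝ := (∑ i, |x i| ^ p) ^ (1 / p)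

/-- Best `k`-term approximation error in ℓ₁. -/
def sigma1 {N : ℕ} (k : ℕ) (x : Fin N → ℝ) : ℝ :=
  sInf {t | ∃ z : Fin N → ℝ, sparse k z ∧ t = l1 (x - z)}

/-- Best `k`-term approximation error in a general norm `X`. -/
def sigmaX {N : ℕ} (X : (Fin N → ℝ) → ℝ) (k : ℕ) (x : Fin N → ℝ) : ℝ :=
  sInf {t | ∃ z : Fin N → ℝ, sparse k z ∧ t = X (x - z)}

/-- Best `k`-term approximation error in the ℓ_q norm. -/
def sigmaQ {N : ℕ} (q : ℝ) (k : ℕ) (x : Fin N → ℝ) : ℝ :=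
  sInf {t | ∃ z : Fin N → ℝ, sparse k z ∧ t = lpnorm q (x - z)}

/-- The entrywise absolute value of `A x`. -/
def absMulVec {m N : ℕ} (A : Matrix (Fin m) (Fin N) ℝ) (x : Fin N → ℝ) : Fin m → ℝ :=
  fun i => |A.mulVec x i|

/-- `X` is a norm on `ℝ^N`: triangle inequality, absolute homogeneity, definiteness. -/
def IsNorm {N : ℕ} (X : (Fin N → ℝ) → ℝ) : Prop :=
  (∀ x y, X (x + y) ≤ X x + X y) ∧ (∀ (c : ℝ) (x), X (c • x) = |c| * X x) ∧
  (∀ x, X x = 0 → x = 0)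

/-- A tail dominated entrywise by `m`, itself dominated by the head, has squared `ℓ₂` norm
controlled by that of the head and the `ℓ₁` slack. -/
theorem sum_sq_le_of_abs_le_of_le_abs {ι : Type*} {S T : Finset ι} {f : ι → ℝ} {m R : ℝ}
    (hm : 0 ≤ m) (hR : 0 ≤ R) (hS : ∀ i ∈ S, m ≤ |f i|) (hT : ∀ j ∈ T, |f j| ≤ m)
    (hsum : ∑ j ∈ T, |f j| ≤ ∑ i ∈ S, |f i| + R * Real.sqrt S.card) :
    ∑ j ∈ T, f j ^ 2 ≤ ∑ i ∈ S, f i ^ 2 + R * Real.sqrt (∑ i ∈ S, f i ^ 2) := by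
  have tail : ∑ j ∈ T, f j ^ 2 ≤ m * ∑ j ∈ T, |f j| := by
    rw [Finset.mul_sum]
    refine Finset.sum_le_sum fun j hj => ?_
    rw [← sq_abs, sq]
    exact mul_le_mul_of_nonneg_right (hT j hj) (abs_nonneg _)
  have head : m * ∑ i ∈ S, |f i| ≤ ∑ i ∈ S, f i ^ 2 := by
    rw [Finset.mul_sum]
    refine Finset.sum_le_sum fun i hi => ?_
    rw [← sq_abs (f i), sq]
    exact mul_le_mul_of_nonneg_right (hS i hi) (abs_nonneg _)
  have slack : m * Real.sqrt S.card ≤ Real.sqrt (∑ i ∈ S, f i ^ 2) := by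
    apply Real.le_sqrt_of_sq_le
    rw [mul_pow, Real.sq_sqrt (Nat.cast_nonneg _), mul_comm, ← nsmul_eq_mul]
    refine Finset.card_nsmul_le_sum _ _ _ fun i hi => ?_
    rw [← sq_abs (f i)]
    exact pow_le_pow_left₀ hm (hS i hi) 2
  nlinarith [mul_le_mul_of_nonneg_left hsum hm, mul_le_mul_of_nonneg_left slack hR]

/-- ℓ₂ comparison of a vector with its head on the k largest entries. -/
theorem stmt19 {N k : ℕ} (hk : 0 < k) (R : ℝ) (hR : 0 ≤ R)
    (h : Fin N → ℝ) (S₀ : Finset (Fin N)) (hcard : S₀.card = k)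
    (hlargest : ∀ i ∈ S₀, ∀ j ∉ S₀, |h j| ≤ |h i|)
    (hsum : ∑ i ∈ S₀ᶜ, |h i| ≤ ∑ i ∈ S₀, |h i| + R * Real.sqrt k) :
    Real.sqrt (∑ i ∈ S₀ᶜ, (h i) ^ 2) ≤ Real.sqrt (∑ i ∈ S₀, (h i) ^ 2) + R ∧
    l2 h ≤ Real.sqrt 2 * Real.sqrt (∑ i ∈ S₀, (h i) ^ 2) + R := by
  subst hcard
  obtain ⟨i₀, hi₀, hmin⟩ := S₀.exists_min_image (fun i => |h i|) (Finset.card_pos.mp hk)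
  have key := sum_sq_le_of_abs_le_of_le_abs (abs_nonneg (h i₀)) hR hmin
    (fun j hj => hlargest i₀ hi₀ j (Finset.mem_compl.mp hj)) hsum
  have hnn : 0 ≤ ∑ i ∈ S₀, h i ^ 2 := Finset.sum_nonneg fun i _ => sq_nonneg _
  have hsplit : l2sq h = ∑ i ∈ S₀, h i ^ 2 + ∑ i ∈ S₀ᶜ, h i ^ 2 :=
    (Finset.sum_add_sum_compl S₀ _).symm
  rw [l2, hsplit]
  set a := Real.sqrt (∑ i ∈ S₀, h i ^ 2)
  have ha : 0 ≤ a := Real.sqrt_nonneg _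
  have hasq : a ^ 2 = ∑ i ∈ S₀, h i ^ 2 := Real.sq_sqrt hnn
  have haR : 0 ≤ a * R := mul_nonneg ha hR
  constructor
  · exact Real.sqrt_le_iff.mpr ⟨by positivity, by nlinarith⟩
  · have htwo : Real.sqrt 2 ^ 2 = 2 := Real.sq_sqrt (by norm_num)
    have hone : 1 ≤ Real.sqrt 2 := Real.one_le_sqrt.mpr (by norm_num)
    refine Real.sqrt_le_iff.mpr ⟨by positivity, ?_⟩
    have hexp : (Real.sqrt 2 * a + R) ^ 2 = 2 * a ^ 2 + 2 * Real.sqrt 2 * (a * R) + R ^ 2 := by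
      linear_combination a ^ 2 * htwo
    nlinarith [mul_le_mul_of_nonneg_right hone haR, sq_nonneg R]
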